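/- arXiv:2110.10961 — 4 statements merged into one kernel-verified Lean document; each statement's English description precedes it below -/
import Mathlib

section
/- Let l ≤ u be real numbers and p ∈ [0,1]. Then the supremum over c ∈ [l,u] of the regret max(c,0) − p·c equals max((1−p)·max(u,0), p·max(−l,0)). -/
/-!
The regret `max c 0 - p * c` is the maximum of `(1 - p) * max c 0`, which increases with `c`, and
`p * max (-c) 0`, which decreases with `c`. On `[l, u]` the first is therefore largest at `u` and
the second at `l`, and the larger of these two values is attained by the regret at that endpoint.
-/

open Set

theorem isGreatest_image_Icc_max_of_monotoneOn_antitoneOn {α β : Type*} [Preorder α]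
    [LinearOrder β] {f g : α → β} {a b : α} (hab : a ≤ b) (hf : MonotoneOn f (Icc a b))
    (hg : AntitoneOn g (Icc a b)) :
    IsGreatest ((fun x => max (f x) (g x)) '' Icc a b) (max (f b) (g a)) := by
  have ha : a ∈ Icc a b := left_mem_Icc.2 hab
  have hb : b ∈ Icc a b := right_mem_Icc.2 hab
  constructor
  · rcases le_total (g a) (f b) with h | h
    · refine ⟨b, hb, ?_⟩
      simp only [max_eq_left h, max_eq_left ((hg ha hb hab).trans h)]
    · refine ⟨a, ha, ?_⟩
      simp only [max_eq_right h, max_eq_right ((hf ha hb hab).trans h)]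
  · rintro _ ⟨x, hx, rfl⟩
    exact max_le_max (hf hx hb hx.2) (hg ha hx hx.1)

section OrderedRing

variable {R : Type*} [Ring R] [LinearOrder R] [IsOrderedRing R]

theorem max_zero_sub_mul_eq_max {p : R} (hp : p ∈ Icc 0 1) (c : R) :
    max c 0 - p * c = max ((1 - p) * max c 0) (p * max (-c) 0) := by
  rcases le_total 0 c with hc | hc
  · have hnonneg : 0 ≤ (1 - p) * c := mul_nonneg (sub_nonneg.2 hp.2) hc
    rw [max_eq_left hc, max_eq_right (neg_nonpos.2 hc), mul_zero, max_eq_left hnonneg, sub_mul,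
      one_mul]
  · have hnonneg : 0 ≤ p * -c := mul_nonneg hp.1 (neg_nonneg.2 hc)
    rw [max_eq_right hc, max_eq_left (neg_nonneg.2 hc), mul_zero, max_eq_right hnonneg, zero_sub,
      mul_neg]

theorem stmt_0_general {l u p : R} (hlu : l ≤ u) (hp : p ∈ Icc 0 1) :
    IsGreatest ((fun c => max c 0 - p * c) '' Icc l u)
      (max ((1 - p) * max u 0) (p * max (-l) 0)) := by
  have hmono : Monotone fun c : R => (1 - p) * max c 0 := fun _ _ h =>
    mul_le_mul_of_nonneg_left (max_le_max_right 0 h) (sub_nonneg.2 hp.2)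
  have hanti : Antitone fun c : R => p * max (-c) 0 := fun _ _ h =>
    mul_le_mul_of_nonneg_left (max_le_max_right 0 (neg_le_neg h)) hp.1
  simp only [max_zero_sub_mul_eq_max hp]
  exact isGreatest_image_Icc_max_of_monotoneOn_antitoneOn hlu (hmono.monotoneOn _)
    (hanti.antitoneOn _)

end OrderedRing

/-- For reals `l ≤ u` and `p ∈ [0,1]`, the supremum over `c ∈ [l,u]` of the regret
`max(c,0) − p·c` equals `max((1−p)·max(u,0), p·max(−l,0))`. -/
theorem stmt_0 (l u p : ℝ) (hlu : l ≤ u) (hp : p ∈ Set.Icc (0:ℝ) 1) :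
    sSup ((fun c => max c 0 - p * c) '' Set.Icc l u)
      = max ((1 - p) * max u 0) (p * max (-l) 0) :=
  (stmt_0_general hlu hp).csSup_eq
end

section
/- Let l ≤ u be real numbers and define p*(l,u) = 0 if u ≤ 0, p*(l,u) = 1 if l ≥ 0, and p*(l,u) = u/(u−l) if l < 0 < u. Then for every c with l ≤ c ≤ u, the regret satisfies max(c,0) − p*(l,u)·c ≤ (−l·u/(u−l)) if l < 0 < u, and max(c,0) − p*(l,u)·c ≤ 0 otherwise. -/
open Classical in
/-- The randomized minimax rule probability: `0` if `u ≤ 0`, `1` if `l ≥ 0`,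
and `u/(u−l)` if `l < 0 < u`. -/
noncomputable def pStar (l u : ℝ) : ℝ :=
  if u ≤ 0 then 0 else if 0 ≤ l then 1 else u / (u - l)

/-!
The regret is a convex function of the effect `c`, so on `[l, u]` it is at most the larger of its
values at the endpoints. When `l < 0 < u` these are `-p * l` and `(1 - p) * u`, and
`p = u / (u - l)` is the probability that makes them equal.
-/

section Ring

variable {R : Type*} [Ring R] [LinearOrder R] {p c : R}

/-- The regret, under the treatment effect `c`, of the decision rule that chooses action `1` with
probability `p`. The constraint `p ∈ [0, 1]` is not part of the definition. -/
def regret (p c : R) : R :=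
  max c 0 - p * c

theorem regret_of_nonneg (hc : 0 ≤ c) : regret p c = (1 - p) * c := by
  rw [regret, max_eq_left hc, sub_mul, one_mul]

theorem regret_of_nonpos (hc : c ≤ 0) : regret p c = -p * c := by
  rw [regret, max_eq_right hc, zero_sub, neg_mul]

end Ring

section Field

variable {𝕜 : Type*} [Field 𝕜] [LinearOrder 𝕜] {p c l u : 𝕜}

theorem regret_div_sub_left (hl : l ≤ 0) : regret (u / (u - l)) l = -l * u / (u - l) := by
  rw [regret_of_nonpos hl]
  ring

theorem regret_div_sub_right (hlu : l ≠ u) (hu : 0 ≤ u) :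
    regret (u / (u - l)) u = -l * u / (u - l) := by
  have hd : u - l ≠ 0 := sub_ne_zero.mpr hlu.symm
  rw [regret_of_nonneg hu, one_sub_div hd]
  ring

variable [IsStrictOrderedRing 𝕜]

theorem convexOn_regret (p : 𝕜) : ConvexOn 𝕜 Set.univ (regret p) :=
  ((convexOn_id convex_univ).sup (convexOn_const 0 convex_univ)).sub
    ((LinearMap.mulLeft 𝕜 p).concaveOn convex_univ)

theorem regret_le_max_of_mem_Icc (hc : c ∈ Set.Icc l u) :
    regret p c ≤ max (regret p l) (regret p u) :=
  (convexOn_regret p).le_max_of_mem_Icc (Set.mem_univ l) (Set.mem_univ u) hc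

theorem regret_div_sub_le (hl : l ≤ 0) (hu : 0 ≤ u) (hlu : l ≠ u) (hc : c ∈ Set.Icc l u) :
    regret (u / (u - l)) c ≤ -l * u / (u - l) := by
  simpa only [regret_div_sub_left hl, regret_div_sub_right hlu hu, max_self] using
    regret_le_max_of_mem_Icc (p := u / (u - l)) hc

end Field

section MinimaxRule

variable {l u c : ℝ}

theorem pStar_of_nonpos (hu : u ≤ 0) : pStar l u = 0 :=
  if_pos hu

theorem pStar_of_nonneg (hl : 0 ≤ l) (hu : 0 < u) : pStar l u = 1 := by
  rw [pStar, if_neg hu.not_ge, if_pos hl]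

theorem pStar_of_neg_of_pos (hl : l < 0) (hu : 0 < u) : pStar l u = u / (u - l) := by
  rw [pStar, if_neg hu.not_ge, if_neg hl.not_ge]

theorem regret_pStar_of_nonpos (hu : u ≤ 0) (hcu : c ≤ u) : regret (pStar l u) c = 0 := by
  rw [pStar_of_nonpos hu, regret_of_nonpos (hcu.trans hu), neg_zero, zero_mul]

theorem regret_pStar_of_nonneg (hl : 0 ≤ l) (hu : 0 < u) (hlc : l ≤ c) :
    regret (pStar l u) c = 0 := by
  rw [pStar_of_nonneg hl hu, regret_of_nonneg (hl.trans hlc), sub_self, zero_mul]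

theorem regret_pStar_le_of_neg_of_pos (hl : l < 0) (hu : 0 < u) (hc : c ∈ Set.Icc l u) :
    regret (pStar l u) c ≤ -l * u / (u - l) := by
  rw [pStar_of_neg_of_pos hl hu]
  exact regret_div_sub_le hl.le hu.le (hl.trans hu).ne hc

end MinimaxRule

open Classical in
/-- For `l ≤ u` and any `c ∈ [l,u]`, the regret `max(c,0) − p*(l,u)·c` is at most
`−l·u/(u−l)` when `l < 0 < u`, and at most `0` otherwise. -/
theorem stmt_2 (l u : ℝ) (hlu : l ≤ u) :
    ∀ c : ℝ, l ≤ c → c ≤ u →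
      max c 0 - pStar l u * c ≤
        if l < 0 ∧ 0 < u then -l * u / (u - l) else 0 := by
  intro c hlc hcu
  change regret (pStar l u) c ≤ _
  split_ifs with h
  · exact regret_pStar_le_of_neg_of_pos h.1 h.2 ⟨hlc, hcu⟩
  · rcases le_or_gt u 0 with hu | hu
    · exact (regret_pStar_of_nonpos hu hcu).le
    · have hl : 0 ≤ l := not_lt.mp fun hl => h ⟨hl, hu⟩
      exact (regret_pStar_of_nonneg hl hu hlc).le
end

section
/- Let (Ω, μ) be a probability space, and let L₋₁, U₋₁, L₁, U₁, Y₋₁, Y₁ : Ω → ℝ be measurable integrable functions with L₋₁ ≤ Y₋₁ ≤ U₋₁ and L₁ ≤ Y₁ ≤ U₁ pointwise; set L = L₁ − U₋₁ and U = U₁ − L₋₁. Let w : Ω → [0,1] be measurable and D : Ω → {−1,1} measurable. Then ∫ [(1−w)·(L·I{D=1} + L₋₁) + w·(−U·I{D=−1} + L₁)] dμ ≤ ∫ [Y₁·I{D=1} + Y₋₁·I{D=−1}] dμ. -/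
open MeasureTheory

/-! Taking arm `b` as baseline, `Y_D = Y_b + (Y_a - Y_b) I{D = a}`, so a lower bound for `Y_b` and
one for the contrast `Y_a - Y_b` combine into a lower bound for `Y_D`. The two choices of baseline
arm give the two bracketed expressions, and a bound that holds for both pointwise holds for every
convex combination of them, even when the weight varies with the point. -/

section PointwiseBound

variable {R α : Type*} [Ring R] [PartialOrder R] [IsOrderedAddMonoid R] [DecidableEq α]

theorem contrast_mul_ite_add_baseline_le {d a b : α} {δ l ya yb : R} (hab : a ≠ b)
    (hd : d = a ∨ d = b) (hδ : δ ≤ ya - yb) (hl : l ≤ yb) :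
    δ * (if d = a then 1 else 0) + l
      ≤ ya * (if d = a then 1 else 0) + yb * (if d = b then 1 else 0) := by
  rcases hd with rfl | rfl
  · simpa [hab] using add_le_add hδ hl
  · simpa [hab.symm] using hl

end PointwiseBound

section Integral

variable {Ω : Type*} [MeasurableSpace Ω] {μ : Measure Ω} {f g h w : Ω → ℝ}

theorem integrable_mul_of_mem_Icc (hf : Integrable f μ) (hw : AEMeasurable w μ)
    (hw01 : ∀ᵐ x ∂μ, w x ∈ Set.Icc 0 1) : Integrable (fun x ↦ w x * f x) μ :=
  hf.bdd_mul (c := 1) hw.aestronglyMeasurable <| hw01.mono fun _ hx ↦ by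
    simpa only [Real.norm_of_nonneg hx.1] using hx.2

theorem integral_convexCombo_le (hf : Integrable f μ) (hg : Integrable g μ) (hh : Integrable h μ)
    (hw : AEMeasurable w μ) (hw01 : ∀ᵐ x ∂μ, w x ∈ Set.Icc 0 1)
    (hfh : f ≤ᵐ[μ] h) (hgh : g ≤ᵐ[μ] h) :
    ∫ x, ((1 - w x) * f x + w x * g x) ∂μ ≤ ∫ x, h x ∂μ := by
  have one_sub_w_mem : ∀ᵐ x ∂μ, 1 - w x ∈ Set.Icc 0 1 :=
    hw01.mono fun _ hx ↦ Set.Icc.mem_iff_one_sub_mem.1 hx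
  refine integral_mono_ae ((integrable_mul_of_mem_Icc hf (hw.const_sub 1) one_sub_w_mem).add
    (integrable_mul_of_mem_Icc hg hw hw01)) hh ?_
  filter_upwards [hw01, hfh, hgh] with x hx hfx hgx
  exact convex_Iic (h x) hfx hgx (sub_nonneg.2 hx.2) hx.1 (sub_add_cancel 1 (w x))

variable {α : Type*} [MeasurableSpace α] [MeasurableSingletonClass α] [DecidableEq α] {D : Ω → α}

theorem integrable_mul_ite_eq (hf : Integrable f μ) (hD : AEMeasurable D μ) (a : α) :
    Integrable (fun x ↦ f x * (if D x = a then 1 else 0)) μ := by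
  have hDa : NullMeasurableSet (D ⁻¹' {a}) μ := hD.nullMeasurableSet_preimage (.singleton a)
  refine (hf.indicator₀ hDa).congr (.of_forall fun x ↦ ?_)
  by_cases hx : D x = a <;> simp [hx]

theorem stmt_8_general {a b : α} {L U La Lb Ya Yb : Ω → ℝ} (hab : a ≠ b)
    (hD : AEMeasurable D μ) (hDab : ∀ᵐ x ∂μ, D x = a ∨ D x = b)
    (hw : AEMeasurable w μ) (hw01 : ∀ᵐ x ∂μ, w x ∈ Set.Icc 0 1)
    (hL : Integrable L μ) (hU : Integrable U μ) (hLa : Integrable La μ) (hLb : Integrable Lb μ)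
    (hYa : Integrable Ya μ) (hYb : Integrable Yb μ)
    (hLY : ∀ᵐ x ∂μ, L x ≤ Ya x - Yb x) (hYU : ∀ᵐ x ∂μ, Ya x - Yb x ≤ U x)
    (hLaYa : La ≤ᵐ[μ] Ya) (hLbYb : Lb ≤ᵐ[μ] Yb) :
    ∫ x, ((1 - w x) * (L x * (if D x = a then 1 else 0) + Lb x)
        + w x * (-U x * (if D x = b then 1 else 0) + La x)) ∂μ
      ≤ ∫ x, (Ya x * (if D x = a then 1 else 0) + Yb x * (if D x = b then 1 else 0)) ∂μ := by
  refine integral_convexCombo_le ((integrable_mul_ite_eq hL hD a).add hLb)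
    ((integrable_mul_ite_eq hU.neg hD b).add hLa)
    ((integrable_mul_ite_eq hYa hD a).add (integrable_mul_ite_eq hYb hD b)) hw hw01 ?_ ?_
  · filter_upwards [hDab, hLY, hLbYb] with x hd hδ hl
    exact contrast_mul_ite_add_baseline_le hab hd hδ hl
  · filter_upwards [hDab, hYU, hLaYa] with x hd hδ hl
    have neg_U_le : -U x ≤ Yb x - Ya x := neg_le.1 (by rwa [neg_sub])
    rw [add_comm (Ya x * _)]
    exact contrast_mul_ite_add_baseline_le hab.symm hd.symm neg_U_le hl

end Integral

/-- Integrated lower-bound inequality for the value function: on a probability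
space, with pointwise counterfactual mean bounds `L₋₁ ≤ Y₋₁ ≤ U₋₁`,
`L₁ ≤ Y₁ ≤ U₁`, CATE bounds `L = L₁ − U₋₁`, `U = U₁ − L₋₁`, a measurable
weight `w : Ω → [0,1]` and a measurable decision rule `D : Ω → {−1,1}`:
`∫ [(1−w)(L·I{D=1} + L₋₁) + w(−U·I{D=−1} + L₁)] dμ
  ≤ ∫ [Y₁·I{D=1} + Y₋₁·I{D=−1}] dμ`. -/
theorem stmt_8 {Ω : Type*} [MeasurableSpace Ω] (μ : Measure Ω) [IsProbabilityMeasure μ]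
    (Lm1 Um1 L1 U1 Ym1 Y1 w : Ω → ℝ) (D : Ω → ℤ)
    (hLm1 : Measurable Lm1) (hUm1 : Measurable Um1)
    (hL1 : Measurable L1) (hU1 : Measurable U1)
    (hYm1 : Measurable Ym1) (hY1 : Measurable Y1)
    (hw : Measurable w) (hD : Measurable D)
    (hLm1i : Integrable Lm1 μ) (hUm1i : Integrable Um1 μ)
    (hL1i : Integrable L1 μ) (hU1i : Integrable U1 μ)
    (hYm1i : Integrable Ym1 μ) (hY1i : Integrable Y1 μ)
    (hbm1 : ∀ x, Lm1 x ≤ Ym1 x ∧ Ym1 x ≤ Um1 x)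
    (hb1 : ∀ x, L1 x ≤ Y1 x ∧ Y1 x ≤ U1 x)
    (hwb : ∀ x, w x ∈ Set.Icc (0:ℝ) 1)
    (hDb : ∀ x, D x = -1 ∨ D x = 1) :
    ∫ x, ((1 - w x) * ((L1 x - Um1 x) * (if D x = 1 then (1:ℝ) else 0) + Lm1 x)
        + w x * (-(U1 x - Lm1 x) * (if D x = -1 then (1:ℝ) else 0) + L1 x)) ∂μ
      ≤ ∫ x, (Y1 x * (if D x = 1 then (1:ℝ) else 0)
        + Ym1 x * (if D x = -1 then (1:ℝ) else 0)) ∂μ :=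
  stmt_8_general (by decide) hD.aemeasurable (.of_forall fun x ↦ (hDb x).symm) hw.aemeasurable
    (.of_forall hwb) (hL1i.sub hUm1i) (hU1i.sub hLm1i) hL1i hLm1i hY1i hYm1i
    (.of_forall fun x ↦ sub_le_sub (hb1 x).1 (hbm1 x).2)
    (.of_forall fun x ↦ sub_le_sub (hb1 x).2 (hbm1 x).1)
    (.of_forall fun x ↦ (hb1 x).1) (.of_forall fun x ↦ (hbm1 x).1)
end

section
/- Let l₋₁ ≤ u₋₁ and l₁ ≤ u₁ be real numbers, set L = l₁ − u₋₁ and U = u₁ − l₋₁, and for d ∈ {−1,1} define P(d) = L·I{d=1} + l₋₁ and Q(d) = −U·I{d=−1} + l₁. With the preference weight w(d) = I{P(d) > Q(d)}, the lower-bound objective satisfies [(1−w(1))P(1) + w(1)Q(1)] − [(1−w(−1))P(−1) + w(−1)Q(−1)] = u₁ − u₋₁; hence the maximizing decision is d = 1 if u₁ > u₋₁ and d = −1 if u₁ < u₋₁ (the maximax utility rule). -/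
/-!
The weight `I{P > Q}` selects the smaller of `P` and `Q`, so the objective is `min (P d) (Q d)`.
Since `l₋₁ ≤ u₋₁` and `l₁ ≤ u₁`, the minimum is `P 1 = l₋₁ + l₁ - u₋₁` at `d = 1` and
`Q (-1) = l₋₁ + l₁ - u₁` at `d = -1`; the difference is `u₁ - u₋₁`.
-/

/-- `P(d) = L·I{d=1} + l₋₁` with `L = l₁ − u₋₁`. -/
def P (lm1 um1 l1 u1 : ℝ) (d : ℤ) : ℝ :=
  (l1 - um1) * (if d = 1 then 1 else 0) + lm1

/-- `Q(d) = −U·I{d=−1} + l₁` with `U = u₁ − l₋₁`. -/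
def Q (lm1 um1 l1 u1 : ℝ) (d : ℤ) : ℝ :=
  -(u1 - lm1) * (if d = -1 then 1 else 0) + l1

/-- The maximax weight `w(d) = I{P(d) > Q(d)}`. -/
noncomputable def wMaximax (lm1 um1 l1 u1 : ℝ) (d : ℤ) : ℝ :=
  if P lm1 um1 l1 u1 d > Q lm1 um1 l1 u1 d then 1 else 0

/-- The lower-bound objective with weight `w`. -/
noncomputable def objMaximax (lm1 um1 l1 u1 : ℝ) (d : ℤ) : ℝ :=
  (1 - wMaximax lm1 um1 l1 u1 d) * P lm1 um1 l1 u1 d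
    + wMaximax lm1 um1 l1 u1 d * Q lm1 um1 l1 u1 d

theorem one_sub_ite_mul_add_ite_mul_eq_min {R : Type*} [NonAssocRing R] [LinearOrder R]
    (p q : R) :
    (1 - if q < p then 1 else 0) * p + (if q < p then 1 else 0) * q = min p q := by
  split_ifs with hqp
  · rw [sub_self, zero_mul, zero_add, one_mul, min_eq_right hqp.le]
  · rw [sub_zero, one_mul, zero_mul, add_zero, min_eq_left (not_lt.mp hqp)]

section Objective

variable (lm1 um1 l1 u1 : ℝ)

theorem P_one : P lm1 um1 l1 u1 1 = lm1 + l1 - um1 := by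
  rw [P, if_pos rfl]
  ring

theorem P_neg_one : P lm1 um1 l1 u1 (-1) = lm1 := by
  simp [P]

theorem Q_one : Q lm1 um1 l1 u1 1 = l1 := by
  simp [Q]

theorem Q_neg_one : Q lm1 um1 l1 u1 (-1) = lm1 + l1 - u1 := by
  rw [Q, if_pos rfl]
  ring

theorem objMaximax_eq_min (d : ℤ) :
    objMaximax lm1 um1 l1 u1 d = min (P lm1 um1 l1 u1 d) (Q lm1 um1 l1 u1 d) :=
  one_sub_ite_mul_add_ite_mul_eq_min _ _

variable {lm1 um1 l1 u1}

theorem objMaximax_one (h : lm1 ≤ um1) : objMaximax lm1 um1 l1 u1 1 = lm1 + l1 - um1 := by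
  rw [objMaximax_eq_min, P_one, Q_one]
  exact min_eq_left (by linarith)

theorem objMaximax_neg_one (h : l1 ≤ u1) : objMaximax lm1 um1 l1 u1 (-1) = lm1 + l1 - u1 := by
  rw [objMaximax_eq_min, P_neg_one, Q_neg_one]
  exact min_eq_right (by linarith)

end Objective

/-- Maximax utility row of Table 1: with `w(d) = I{P(d) > Q(d)}`, the difference
of the lower-bound objective between `d = 1` and `d = −1` equals `u₁ − u₋₁`;
hence the maximizing decision is `d = 1` if `u₁ > u₋₁` and `d = −1` if `u₁ < u₋₁`. -/
theorem stmt_10 (lm1 um1 l1 u1 : ℝ) (h1 : lm1 ≤ um1) (h2 : l1 ≤ u1) :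
    objMaximax lm1 um1 l1 u1 1 - objMaximax lm1 um1 l1 u1 (-1) = u1 - um1
    ∧ (um1 < u1 → objMaximax lm1 um1 l1 u1 (-1) < objMaximax lm1 um1 l1 u1 1)
    ∧ (u1 < um1 → objMaximax lm1 um1 l1 u1 1 < objMaximax lm1 um1 l1 u1 (-1)) := by
  rw [objMaximax_one h1, objMaximax_neg_one h2]
  exact ⟨sub_sub_sub_cancel_left _ _ _, fun h => sub_lt_sub_left h _, fun h => sub_lt_sub_left h _⟩
end
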